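/- For every ε > 0 there exists a time horizon T and a sequence of valuations (s_t,b_t) ∈ [0,1]^2 such that the best revenue-nonnegative distribution γ* over price pairs satisfies E_{(p,q)∼γ*}[Σ_{t=1}^T GFT_t(p,q)] ≥ (2 − ε)·max_{p∈[0,1]} Σ_{t=1}^T GFT_t(p,p). Concretely, take (s_t,b_t) = (0, 1/2 − ε') for odd t and (1/2 + ε', 1) for even t, for a suitably small ε' > 0. -/

import Mathlib

open Finset MeasureTheory

noncomputable def gft (s b p q : ℝ) : ℝ :=
  (if s ≤ p then (1:ℝ) else 0) * (if q ≤ b then (1:ℝ) else 0) * (b - s)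

noncomputable def rev (s b p q : ℝ) : ℝ :=
  (if s ≤ p then (1:ℝ) else 0) * (if q ≤ b then (1:ℝ) else 0) * (q - p)

/-!
Two trades with disjoint valuation intervals of the same length `1/2 - δ` cannot both be executed
by one fixed price, so a fixed price gains at most `1/2 - δ`. The crossed pair
`(1/2 + δ, 1/2 - δ)` executes both, at a loss of `4δ`; the pair `(0, 1/2 - δ)` executes only the
first, but earns `1/2 - δ`. The weight `α` of the crossed pair at which the expected revenue
vanishes is `(1 - 2δ) / (1 + 6δ)`. The mixture gains `(1 + α) (1/2 - δ)` in expectation,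
and `α → 1` as `δ → 0`.
-/

open ProbabilityTheory unitInterval

section Trade

variable {s b p q : ℝ}

theorem gft_of_le_of_le (hp : s ≤ p) (hq : q ≤ b) : gft s b p q = b - s := by
  simp [gft, hp, hq]

theorem gft_of_lt_seller (hp : p < s) : gft s b p q = 0 := by
  simp [gft, hp.not_ge]

theorem gft_of_buyer_lt (hq : b < q) : gft s b p q = 0 := by
  simp [gft, hq.not_ge]

theorem gft_nonneg (h : s ≤ b) : 0 ≤ gft s b p q := by
  unfold gft
  have := sub_nonneg.2 h
  positivity

theorem gft_le_sub (h : s ≤ b) : gft s b p q ≤ b - s := by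
  unfold gft
  have := sub_nonneg.2 h
  split_ifs <;> linarith

theorem rev_of_le_of_le (hp : s ≤ p) (hq : q ≤ b) : rev s b p q = q - p := by
  simp [rev, hp, hq]

theorem rev_of_lt_seller (hp : p < s) : rev s b p q = 0 := by
  simp [rev, hp.not_ge]

theorem gft_self_add_gft_self_le_max {s₁ b₁ s₂ b₂ : ℝ} (h₁ : s₁ ≤ b₁) (h : b₁ < s₂)
    (h₂ : s₂ ≤ b₂) (p : ℝ) :
    gft s₁ b₁ p p + gft s₂ b₂ p p ≤ max (b₁ - s₁) (b₂ - s₂) := by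
  rcases lt_or_ge p s₂ with hp | hp
  · rw [gft_of_lt_seller hp, add_zero]
    exact le_max_of_le_left (gft_le_sub h₁)
  · rw [gft_of_buyer_lt (h.trans_le hp), zero_add]
    exact le_max_of_le_right (gft_le_sub h₂)

end Trade

/-- The seller valuations of the tight instance, where `δ` is the small parameter of the informal
statement. Rounds are counted from `0`, so the odd rounds of that statement have even index. -/
noncomputable def altSeller (δ : ℝ) (t : ℕ) : ℝ := if Even t then 0 else 1 / 2 + δ

/-- The buyer valuations of the tight instance, indexed as in `altSeller`. -/
noncomputable def altBuyer (δ : ℝ) (t : ℕ) : ℝ := if Even t then 1 / 2 - δ else 1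

/-- The law of the random price pair that is `(1/2 + δ, 1/2 - δ)` with probability `α` and
`(0, 1/2 - δ)` otherwise, for an arbitrary weight `α`. -/
noncomputable def mixedPrice (δ : ℝ) (α : I) : Measure (ℝ × ℝ) :=
  bernoulliMeasure (1 / 2 + δ, 1 / 2 - δ) (0, 1 / 2 - δ) α

section TightInstance

variable {δ : ℝ}

theorem altSeller_mem_Icc (h₀ : 0 ≤ δ) (h₁ : δ ≤ 1 / 2) (t : ℕ) :
    altSeller δ t ∈ Set.Icc (0 : ℝ) 1 := by
  unfold altSeller
  split_ifs <;> constructor <;> linarith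

theorem altBuyer_mem_Icc (h₀ : 0 ≤ δ) (h₁ : δ ≤ 1 / 2) (t : ℕ) :
    altBuyer δ t ∈ Set.Icc (0 : ℝ) 1 := by
  unfold altBuyer
  split_ifs <;> constructor <;> linarith

theorem altSeller_le_altBuyer (h₁ : δ ≤ 1 / 2) (t : ℕ) : altSeller δ t ≤ altBuyer δ t := by
  unfold altSeller altBuyer
  split_ifs <;> linarith

theorem sum_gft_alt (δ p q : ℝ) :
    ∑ t ∈ range 2, gft (altSeller δ t) (altBuyer δ t) p q =
      gft 0 (1 / 2 - δ) p q + gft (1 / 2 + δ) 1 p q := by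
  simp [sum_range_succ, altSeller, altBuyer]

theorem sum_rev_alt (δ p q : ℝ) :
    ∑ t ∈ range 2, rev (altSeller δ t) (altBuyer δ t) p q =
      rev 0 (1 / 2 - δ) p q + rev (1 / 2 + δ) 1 p q := by
  simp [sum_range_succ, altSeller, altBuyer]

theorem isGreatest_sum_gft_self (h₀ : 0 < δ) (h₁ : δ ≤ 1 / 2) :
    IsGreatest ((fun p ↦ ∑ t ∈ range 2, gft (altSeller δ t) (altBuyer δ t) p p) ''
      Set.Icc (0 : ℝ) 1) (1 / 2 - δ) := by
  simp only [sum_gft_alt]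
  constructor
  · refine ⟨0, by simp, ?_⟩
    beta_reduce
    rw [gft_of_le_of_le le_rfl (by linarith), gft_of_lt_seller (by linarith)]
    ring
  · rintro _ ⟨p, -, rfl⟩
    calc gft 0 (1 / 2 - δ) p p + gft (1 / 2 + δ) 1 p p
      _ ≤ max (1 / 2 - δ - 0) (1 - (1 / 2 + δ)) :=
        gft_self_add_gft_self_le_max (by linarith) (by linarith) (by linarith) p
      _ = 1 / 2 - δ := by rw [max_eq_left] <;> linarith

instance (δ : ℝ) (α : I) : IsProbabilityMeasure (mixedPrice δ α) := by
  unfold mixedPrice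
  infer_instance

theorem mixedPrice_compl_Icc_prod_Icc (h₀ : 0 ≤ δ) (h₁ : δ ≤ 1 / 2) (α : I) :
    mixedPrice δ α (Set.Icc (0 : ℝ) 1 ×ˢ Set.Icc (0 : ℝ) 1)ᶜ = 0 := by
  refine bernoulliMeasure_apply_of_notMem_of_notMem α
    (measurableSet_Icc.prod measurableSet_Icc).compl (not_not.2 ?_) (not_not.2 ?_) <;>
  refine ⟨⟨?_, ?_⟩, ?_, ?_⟩ <;> dsimp only <;> linarith

theorem integral_gft_mixedPrice (h₀ : 0 ≤ δ) (α : I) :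
    ∫ pq, (∑ t ∈ range 2, gft (altSeller δ t) (altBuyer δ t) pq.1 pq.2) ∂mixedPrice δ α =
      (1 + α) * (1 / 2 - δ) := by
  have crossed : gft 0 (1 / 2 - δ) (1 / 2 + δ) (1 / 2 - δ) +
      gft (1 / 2 + δ) 1 (1 / 2 + δ) (1 / 2 - δ) = 2 * (1 / 2 - δ) := by
    rw [gft_of_le_of_le (by linarith) le_rfl, gft_of_le_of_le le_rfl (by linarith)]
    ring
  have uncrossed : gft 0 (1 / 2 - δ) 0 (1 / 2 - δ) + gft (1 / 2 + δ) 1 0 (1 / 2 - δ) =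
      1 / 2 - δ := by
    rw [gft_of_le_of_le le_rfl le_rfl, gft_of_lt_seller (by linarith)]
    ring
  simp only [sum_gft_alt, mixedPrice, integral_bernoulliMeasure, crossed, uncrossed,
    smul_eq_mul]
  ring

theorem integral_rev_mixedPrice (h₀ : 0 ≤ δ) (α : I) :
    ∫ pq, (∑ t ∈ range 2, rev (altSeller δ t) (altBuyer δ t) pq.1 pq.2) ∂mixedPrice δ α =
      (1 - α) * (1 / 2 - δ) - α * (4 * δ) := by
  have crossed : rev 0 (1 / 2 - δ) (1 / 2 + δ) (1 / 2 - δ) +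
      rev (1 / 2 + δ) 1 (1 / 2 + δ) (1 / 2 - δ) = -(4 * δ) := by
    rw [rev_of_le_of_le (by linarith) le_rfl, rev_of_le_of_le le_rfl (by linarith)]
    ring
  have uncrossed : rev 0 (1 / 2 - δ) 0 (1 / 2 - δ) + rev (1 / 2 + δ) 1 0 (1 / 2 - δ) =
      1 / 2 - δ := by
    rw [rev_of_le_of_le le_rfl le_rfl, rev_of_lt_seller (by linarith)]
    ring
  simp only [sum_rev_alt, mixedPrice, integral_bernoulliMeasure, crossed, uncrossed,
    smul_eq_mul]
  ring

theorem exists_weight_integral_rev_eq_zero (h₀ : 0 ≤ δ) (h₁ : δ ≤ 1 / 2) :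
    ∃ α : I, 1 - 8 * δ ≤ α ∧
      ∫ pq, (∑ t ∈ range 2, rev (altSeller δ t) (altBuyer δ t) pq.1 pq.2) ∂mixedPrice δ α = 0 := by
  have hpos : 0 < 1 + 6 * δ := by linarith
  refine ⟨⟨(1 - 2 * δ) / (1 + 6 * δ),
    unitInterval.div_mem (by linarith) hpos.le (by linarith)⟩, ?_, ?_⟩
  · rw [le_div_iff₀ hpos]
    nlinarith [sq_nonneg δ]
  · rw [integral_rev_mixedPrice h₀]
    field_simp
    ring

end TightInstance

/-- The factor `2` between the best feasible distribution and the best fixed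
price is tight: for every `ε > 0` there is a valuation sequence and a feasible
distribution extracting at least `(2−ε)` times the best fixed price's GFT. -/
theorem stmt_15 (ε : ℝ) (hε : 0 < ε) :
    ∃ (T : ℕ) (s b : ℕ → ℝ), 0 < T ∧
      (∀ t, s t ∈ Set.Icc (0:ℝ) 1 ∧ b t ∈ Set.Icc (0:ℝ) 1) ∧
      ∃ γ : Measure (ℝ × ℝ), IsProbabilityMeasure γ ∧
        γ {pq : ℝ × ℝ | ¬ (pq.1 ∈ Set.Icc (0:ℝ) 1 ∧ pq.2 ∈ Set.Icc (0:ℝ) 1)} = 0 ∧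
        0 ≤ ∫ pq, (∑ t ∈ range T, rev (s t) (b t) pq.1 pq.2) ∂γ ∧
        ∀ p ∈ Set.Icc (0:ℝ) 1,
          (2 - ε) * ∑ t ∈ range T, gft (s t) (b t) p p ≤
            ∫ pq, (∑ t ∈ range T, gft (s t) (b t) pq.1 pq.2) ∂γ := by
  -- The cap at `1 / 4` keeps the best fixed-price gain `1 / 2 - δ` positive.
  obtain ⟨δ, hδ₀, hδ₁, hδε⟩ : ∃ δ : ℝ, 0 < δ ∧ δ < 1 / 2 ∧ 8 * δ ≤ ε :=
    ⟨min (ε / 8) (1 / 4), by positivity, (min_le_right _ _).trans_lt (by norm_num),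
      by linarith [min_le_left (ε / 8) (1 / 4)]⟩
  obtain ⟨α, hα, hrev⟩ := exists_weight_integral_rev_eq_zero hδ₀.le hδ₁.le
  refine ⟨2, altSeller δ, altBuyer δ, two_pos,
    fun t ↦ ⟨altSeller_mem_Icc hδ₀.le hδ₁.le t, altBuyer_mem_Icc hδ₀.le hδ₁.le t⟩,
    mixedPrice δ α, inferInstance, mixedPrice_compl_Icc_prod_Icc hδ₀.le hδ₁.le α, hrev.ge,
    fun p hp ↦ ?_⟩
  rw [integral_gft_mixedPrice hδ₀.le]
  have hfixed := (isGreatest_sum_gft_self hδ₀ hδ₁.le).2 (Set.mem_image_of_mem _ hp)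
  have hnonneg : 0 ≤ ∑ t ∈ range 2, gft (altSeller δ t) (altBuyer δ t) p p :=
    sum_nonneg fun t _ ↦ gft_nonneg (altSeller_le_altBuyer hδ₁.le t)
  exact mul_le_mul (by linarith) hfixed hnonneg (by linarith [α.2.1])
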